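/- arXiv:2404.14418 — 5 statements merged into one kernel-verified Lean document; each statement's English description precedes it below -/
import Mathlib

section
/- Assume every vertex of G has at least one neighbor. Then for every initial failure set Θ ⊆ V and every vertex u in the final failed set F(Θ), there exists θ ∈ Θ and a path from u to θ in G all of whose vertices lie in F(Θ); equivalently, in the subgraph of G induced on F(Θ), every vertex lies in the same connected component as some vertex of Θ. -/
/-- One-round threshold cascade: the set of vertices outside `S` whose fraction of
failed neighbors meets or exceeds their threshold. -/
def cascade {V : Type*} (G : SimpleGraph V) (φ : V → ℝ) (S : Set V) : Set V :=
  {v | v ∉ S ∧ φ v * (G.neighborSet v).ncard ≤ ((G.neighborSet v ∩ S).ncard : ℝ)}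

/-- The cascade sequence `Ω_0 = Θ`, `Ω_{t+1} = Ω_t ∪ c(Ω_t)`. -/
def omegaSeq {V : Type*} (G : SimpleGraph V) (φ : V → ℝ) (Θ : Set V) : ℕ → Set V
  | 0 => Θ
  | t + 1 => omegaSeq G φ Θ t ∪ cascade G φ (omegaSeq G φ Θ t)

/-- The final failed set `F(Θ) = ⋃_{t ≥ 0} Ω_t`. -/
def finalSet {V : Type*} (G : SimpleGraph V) (φ : V → ℝ) (Θ : Set V) : Set V :=
  ⋃ t, omegaSeq G φ Θ t

/-- If every vertex has a neighbor, then every vertex `u` of the final failed set is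
connected, within the subgraph induced on the final failed set, to some initial
failure `θ ∈ Θ`. -/
theorem finalSet_reachable_initial {V : Type*} [Fintype V] (G : SimpleGraph V)
    (φ : V → ℝ) (hφ : ∀ v, 0 < φ v ∧ φ v ≤ 1)
    (hdeg : ∀ v, (G.neighborSet v).Nonempty)
    (Θ : Set V) (u : V) (hu : u ∈ finalSet G φ Θ) :
    ∃ θ ∈ Θ, ∃ hθ : θ ∈ finalSet G φ Θ,
      (G.induce (finalSet G φ Θ)).Reachable ⟨u, hu⟩ ⟨θ, hθ⟩ := by
  obtain ⟨t, ht⟩ := Set.mem_iUnion.1 hu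
  induction t generalizing u with
  | zero => exact ⟨u, ht, hu, SimpleGraph.Reachable.refl _⟩
  | succ t ih =>
    rcases ht with ht | ⟨_, hc⟩
    · exact ih u hu ht
    · have hpos : 0 < (G.neighborSet u).ncard :=
        (Set.ncard_pos (Set.toFinite _)).2 (hdeg u)
      have h1 : (0 : ℝ) < φ u * (G.neighborSet u).ncard :=
        mul_pos (hφ u).1 (by exact_mod_cast hpos)
      have h2 : 0 < (G.neighborSet u ∩ omegaSeq G φ Θ t).ncard := by
        exact_mod_cast lt_of_lt_of_le h1 hc
      obtain ⟨w, hw, hwt⟩ := (Set.ncard_pos (Set.toFinite _)).1 h2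
      have hwF : w ∈ finalSet G φ Θ := Set.mem_iUnion.2 ⟨t, hwt⟩
      obtain ⟨θ, hθ, hθF, hr⟩ := ih w hwF hwt
      have hadj : (G.induce (finalSet G φ Θ)).Adj ⟨u, hu⟩ ⟨w, hwF⟩ := hw
      exact ⟨θ, hθ, hθF, hadj.reachable.trans hr⟩
end

section
/- Correctness of counterfactual validation for the threshold cascade: let v, w ∈ V and set Ω̂ = F({v}) ∪ F({w}). If the counterfactual validity condition c(Ω̂) = ∅ holds, then Ω̂ equals the true final failed set of the combined attack, i.e. F({v, w}) = F({v}) ∪ F({w}). -/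
theorem cascade_mono_aux {V : Type*} [Fintype V] (G : SimpleGraph V) (φ : V → ℝ)
    {S T : Set V} (h : S ⊆ T) : cascade G φ S ⊆ T ∪ cascade G φ T := by
  intro x hx
  by_cases hT : x ∈ T
  · exact Or.inl hT
  · refine Or.inr ⟨hT, hx.2.trans ?_⟩
    exact_mod_cast Set.ncard_le_ncard (Set.inter_subset_inter_right _ h) (Set.toFinite _)

theorem omegaSeq_mono_aux {V : Type*} [Fintype V] (G : SimpleGraph V) (φ : V → ℝ)
    {S T : Set V} (h : S ⊆ T) (t : ℕ) : omegaSeq G φ S t ⊆ omegaSeq G φ T t := by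
  induction t with
  | zero => exact h
  | succ t ih =>
    exact Set.union_subset (ih.trans Set.subset_union_left) (cascade_mono_aux G φ ih)

theorem omegaSeq_closed_aux {V : Type*} [Fintype V] (G : SimpleGraph V) (φ : V → ℝ)
    {S T : Set V} (h : S ⊆ T) (hT : cascade G φ T = ∅) (t : ℕ) : omegaSeq G φ S t ⊆ T := by
  induction t with
  | zero => exact h
  | succ t ih =>
    refine Set.union_subset ih ?_
    have := cascade_mono_aux G φ ih
    rwa [hT, Set.union_empty] at this

/-- Correctness of counterfactual validation for the threshold cascade: if
`Ω̂ = F({v}) ∪ F({w})` satisfies `c(Ω̂) = ∅`, then `F({v,w}) = F({v}) ∪ F({w})`. -/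
theorem counterfactual_valid {V : Type*} [Fintype V] (G : SimpleGraph V)
    (φ : V → ℝ) (hφ : ∀ v, 0 < φ v ∧ φ v ≤ 1) (v w : V)
    (hval : cascade G φ (finalSet G φ {v} ∪ finalSet G φ {w}) = ∅) :
    finalSet G φ {v, w} = finalSet G φ {v} ∪ finalSet G φ {w} := by
  apply Set.Subset.antisymm
  · refine Set.iUnion_subset fun t => omegaSeq_closed_aux G φ ?_ hval t
    rintro x (rfl | hx)
    · exact Or.inl (Set.mem_iUnion.2 ⟨0, rfl⟩)
    · exact Or.inr (Set.mem_iUnion.2 ⟨0, hx⟩)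
  · exact Set.union_subset
      (Set.iUnion_mono fun t => omegaSeq_mono_aux G φ (by simp) t)
      (Set.iUnion_mono fun t => omegaSeq_mono_aux G φ (by simp) t)
end

section
/- Attribution of cascades to initial failures in the threshold model: assume every vertex of G has at least one neighbor, let Θ = {v, w} with v ≠ w, let Ω = F(Θ), and let Γ_v (respectively Γ_w) be the vertex set of the connected component of v (respectively w) in the subgraph of G induced on Ω. Then Ω = Γ_v ∪ Γ_w. -/
/-- The vertex set of the connected component of `v` in the subgraph of `G` induced
on `Ω`: all vertices of `Ω` reachable from `v` within the induced subgraph. -/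
def component {V : Type*} (G : SimpleGraph V) (Ω : Set V) (v : V) : Set V :=
  {x | ∃ (hx : x ∈ Ω) (hv : v ∈ Ω), (G.induce Ω).Reachable ⟨x, hx⟩ ⟨v, hv⟩}

/-- Attribution of cascades to initial failures in the threshold model: if every
vertex has a neighbor and `Θ = {v, w}` with `v ≠ w`, then the final failed set
`Ω = F(Θ)` is the union of the connected components of `v` and of `w` in the
subgraph induced on `Ω`. -/
theorem finalSet_eq_union_components {V : Type*} [Fintype V] (G : SimpleGraph V)
    (φ : V → ℝ) (hφ : ∀ x, 0 < φ x ∧ φ x ≤ 1)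
    (hdeg : ∀ x, (G.neighborSet x).Nonempty)
    (v w : V) (hvw : v ≠ w) :
    finalSet G φ {v, w} =
      component G (finalSet G φ {v, w}) v ∪ component G (finalSet G φ {v, w}) w := by
  have key : ∀ t, ∀ x ∈ omegaSeq G φ {v, w} t,
      x ∈ component G (finalSet G φ {v, w}) v ∪ component G (finalSet G φ {v, w}) w := by
    intro t
    induction t with
    | zero =>
      intro x hx
      have hm : x ∈ finalSet G φ {v, w} := Set.mem_iUnion.2 ⟨0, hx⟩
      have hx' : x = v ∨ x = w := hx
      rcases hx' with rfl | rfl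
      · exact Or.inl ⟨hm, hm, SimpleGraph.Reachable.refl _⟩
      · exact Or.inr ⟨hm, hm, SimpleGraph.Reachable.refl _⟩
    | succ t ih =>
      intro x hx
      have hm : x ∈ finalSet G φ {v, w} := Set.mem_iUnion.2 ⟨t + 1, hx⟩
      have hx' : x ∈ omegaSeq G φ {v, w} t ∨ x ∈ cascade G φ (omegaSeq G φ {v, w} t) := hx
      rcases hx' with h | h
      · exact ih x h
      · obtain ⟨-, h⟩ := h
        have h1 : 0 < (G.neighborSet x).ncard :=
          (Set.ncard_pos (Set.toFinite _)).2 (hdeg x)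
        have h2 : (0 : ℝ) < φ x * (G.neighborSet x).ncard :=
          mul_pos (hφ x).1 (by exact_mod_cast h1)
        have h3 : 0 < (G.neighborSet x ∩ omegaSeq G φ {v, w} t).ncard := by
          exact_mod_cast h2.trans_le h
        obtain ⟨y, hy, hyt⟩ := (Set.ncard_pos (Set.toFinite _)).1 h3
        have hadj : G.Adj x y := hy
        rcases ih y hyt with ⟨hy1, hv, hr⟩ | ⟨hy1, hv, hr⟩
        · refine Or.inl ⟨hm, hv, SimpleGraph.Reachable.trans (SimpleGraph.Adj.reachable ?_) hr⟩
          exact hadj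
        · refine Or.inr ⟨hm, hv, SimpleGraph.Reachable.trans (SimpleGraph.Adj.reachable ?_) hr⟩
          exact hadj
  apply Set.Subset.antisymm
  · intro x hx
    obtain ⟨t, ht⟩ := Set.mem_iUnion.1 hx
    exact key t x ht
  · rintro x (⟨hx, -⟩ | ⟨hx, -⟩) <;> exact hx
end

section
/- Upper bound on load gain from a set of failures (the paper's inequality (8), generalized to a set): for every S ⊆ V and every vertex w ∉ S, the load gained by w when S is deleted is at most the total load carried by S in the original graph, i.e. ℓ_{G−S}(w) − ℓ_G(w) ≤ Σ_{z∈S} ℓ_G(z). In particular, no vertex can gain more load from the failure of a single vertex v than the load ℓ_G(v) that v carried. -/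
/-- `n` is interior to the ordered pair `(s, t)` in `H`: `s ≠ t`, `n` is distinct from
both endpoints, and `n` lies on some shortest `s`–`t` path in `H`. -/
def IsInterior {W : Type*} (H : SimpleGraph W) (n s t : W) : Prop :=
  s ≠ t ∧ n ≠ s ∧ n ≠ t ∧
    ∃ p : H.Walk s t, p.IsPath ∧ p.length = H.dist s t ∧ n ∈ p.support

/-- The load of `n` in `H`: the number of ordered pairs `(s, t)` of vertices such that
`n` is interior to `(s, t)` in `H`. -/
noncomputable def load {W : Type*} (H : SimpleGraph W) (n : W) : ℕ :=
  {p : W × W | IsInterior H n p.1 p.2}.ncard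

theorem interior_of_induce {V : Type*} (G : SimpleGraph V) (S : Finset V) (w : V) (hw : w ∉ S)
    (s t : ((↑S : Set V)ᶜ : Set V))
    (h : IsInterior (G.induce (↑S : Set V)ᶜ) ⟨w, hw⟩ s t) :
    IsInterior G w s t ∨ ∃ z ∈ S, IsInterior G z s t := by
  obtain ⟨hst, hs, ht, p, hp, hl, hm⟩ := h
  have hst' : (s : V) ≠ t := fun e => hst (Subtype.ext e)
  let f := (SimpleGraph.Embedding.induce (G := G) ((↑S : Set V)ᶜ)).toHom
  let p' : G.Walk s t := p.map f
  have hp'l : p'.length = p.length := SimpleGraph.Walk.length_map _ _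
  obtain ⟨q, hq, hql⟩ := (SimpleGraph.Walk.reachable p').exists_path_of_dist
  by_cases hz : ∃ z ∈ S, z ∈ q.support
  · obtain ⟨z, hzS, hzq⟩ := hz
    refine Or.inr ⟨z, hzS, hst', ?_, ?_, q, hq, hql, hzq⟩
    · rintro rfl
      exact s.2 hzS
    · rintro rfl
      exact t.2 hzS
  · push Not at hz
    left
    have hq' : ∀ x ∈ q.support, x ∈ ((↑S : Set V)ᶜ : Set V) := fun x hx hxS => hz x hxS hx
    let r := q.induce _ hq'
    have hr : r.length = q.length := by
      have := congrArg SimpleGraph.Walk.length (SimpleGraph.Walk.map_induce q hq')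
      rw [SimpleGraph.Walk.length_map] at this
      exact this
    have h1 : (G.induce (↑S : Set V)ᶜ).dist s t ≤ r.length := SimpleGraph.dist_le r
    have h2 : G.dist s t ≤ p'.length := SimpleGraph.dist_le p'
    refine ⟨hst', fun e => hs (Subtype.ext e), fun e => ht (Subtype.ext e), p', ?_, by omega, ?_⟩
    · exact SimpleGraph.Walk.map_isPath_of_injective Subtype.val_injective hp
    · have hsup : p'.support = p.support.map f := SimpleGraph.Walk.support_map _ _
      rw [hsup]
      exact List.mem_map.2 ⟨_, hm, rfl⟩

/-- Upper bound on load gain from a set of failures (inequality (8), generalized):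
for every `S ⊆ V` and `w ∉ S`, the load gained by `w` when `S` is deleted is at most
the total load carried by the vertices of `S` in the original graph. -/
theorem load_gain_le_total_load {V : Type*} [Fintype V] [DecidableEq V]
    (G : SimpleGraph V) (S : Finset V) (w : V) (hw : w ∉ S) :
    (load (G.induce (↑S : Set V)ᶜ) ⟨w, hw⟩ : ℤ) - load G w ≤
      ∑ z ∈ S, (load G z : ℤ) := by
  have key : load (G.induce (↑S : Set V)ᶜ) ⟨w, hw⟩ ≤ load G w + ∑ z ∈ S, load G z := by
    have h1 : load (G.induce (↑S : Set V)ᶜ) ⟨w, hw⟩ ≤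
        ({p : V × V | IsInterior G w p.1 p.2} ∪
          ⋃ z ∈ S, {p : V × V | IsInterior G z p.1 p.2}).ncard := by
      refine Set.ncard_le_ncard_of_injOn
        (fun p => ((p.1 : V), (p.2 : V))) ?_ ?_ (Set.toFinite _)
      · rintro ⟨s, t⟩ h
        rcases interior_of_induce G S w hw s t h with h | ⟨z, hz, h⟩
        · exact Or.inl h
        · exact Or.inr (Set.mem_biUnion hz h)
      · rintro ⟨s, t⟩ _ ⟨s', t'⟩ _ h
        simp only [Prod.mk.injEq] at h
        exact Prod.ext (Subtype.ext h.1) (Subtype.ext h.2)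
    refine h1.trans ((Set.ncard_union_le _ _).trans (Nat.add_le_add_left ?_ _))
    exact Finset.set_ncard_biUnion_le S _
  have : (load (G.induce (↑S : Set V)ᶜ) ⟨w, hw⟩ : ℤ) ≤ load G w + ∑ z ∈ S, (load G z : ℤ) := by
    exact_mod_cast key
  linarith
end

section
/- Sufficient condition for counterfactual validity under the shortest-path cascading model (the paper's Proposition 2, made precise): let Ω_v, Ω_w ⊆ V be disjoint sets of failed vertices, let Ω̂ = Ω_v ∪ Ω_w, and let k : V → ℝ be vertex capacities. The one-round shortest-path cascade of Ω̂ is c(Ω̂) = { n ∉ Ω̂ : ℓ_{G−Ω̂}(n) > k(n) }. If for every vertex n ∉ Ω̂ one has k(n) ≥ ℓ_{G−Ω_v}(n) + Σ_{z∈Ω_w} ℓ_{G−Ω_v}(z) (or, symmetrically, k(n) ≥ ℓ_{G−Ω_w}(n) + Σ_{z∈Ω_v} ℓ_{G−Ω_w}(z)), then c(Ω̂) = ∅, i.e. Ω̂ is at steady state. -/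
open Classical

/-- The load of `n` in the graph `G − S` obtained from `G` by deleting the vertices of
`S` (i.e., the subgraph induced on `Sᶜ`); by convention `0` for deleted vertices. -/
noncomputable def loadDel {V : Type*} (G : SimpleGraph V) (S : Set V) (n : V) : ℕ :=
  if h : n ∈ Sᶜ then load (G.induce Sᶜ) ⟨n, h⟩ else 0

/-- Pairs of vertices of `V` to which `n` is interior in `G - S`. -/
def intPairs {V : Type*} (G : SimpleGraph V) (S : Set V) (n : V) : Set (V × V) :=
  {p | ∃ (hn : n ∈ Sᶜ) (hs : p.1 ∈ Sᶜ) (ht : p.2 ∈ Sᶜ),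
    IsInterior (G.induce Sᶜ) ⟨n, hn⟩ ⟨p.1, hs⟩ ⟨p.2, ht⟩}

lemma loadDel_eq {V : Type*} (G : SimpleGraph V) (S : Set V) (n : V) :
    loadDel G S n = (intPairs G S n).ncard := by
  unfold loadDel
  split_ifs with h
  · unfold load
    have hinj : Function.Injective
        (fun p : (Sᶜ : Set V) × (Sᶜ : Set V) => ((p.1 : V), (p.2 : V))) := by
      rintro ⟨⟨a, ha⟩, ⟨b, hb⟩⟩ ⟨⟨c, hc⟩, ⟨d, hd⟩⟩ hh
      simp only [Prod.mk.injEq] at hh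
      obtain ⟨rfl, rfl⟩ := hh
      rfl
    rw [← Set.ncard_image_of_injective _ hinj]
    congr 1
    ext ⟨a, b⟩
    constructor
    · rintro ⟨⟨⟨c, hc⟩, ⟨d, hd⟩⟩, hi, he⟩
      simp only [Prod.mk.injEq] at he
      obtain ⟨rfl, rfl⟩ := he
      exact ⟨h, hc, hd, hi⟩
    · rintro ⟨_, hs, ht, hi⟩
      exact ⟨(⟨a, hs⟩, ⟨b, ht⟩), hi, rfl⟩
  · have : intPairs G S n = ∅ := by
      ext p
      simp only [Set.mem_empty_iff_false, iff_false]
      rintro ⟨hn, _⟩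
      exact h hn
    rw [this, Set.ncard_empty]

lemma lift_walk {V : Type*} (G : SimpleGraph V) (S T : Set V) {a b : (Sᶜ : Set V)}
    (p : (G.induce Sᶜ).Walk a b) (hp : ∀ x ∈ p.support, (x : V) ∈ Tᶜ)
    (ha : (a : V) ∈ Tᶜ) (hb : (b : V) ∈ Tᶜ) :
    ∃ q : (G.induce Tᶜ).Walk ⟨a, ha⟩ ⟨b, hb⟩, q.length = p.length := by
  induction p with
  | nil => exact ⟨.nil, rfl⟩
  | @cons u v w h p ih =>
    have hv : (v : V) ∈ Tᶜ := hp v (by simp)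
    obtain ⟨q, hq⟩ := ih (fun x hx => hp x (by simp [hx])) hv hb
    have hadj : (G.induce Tᶜ).Adj ⟨u, ha⟩ ⟨v, hv⟩ := by
      simpa using h
    exact ⟨.cons hadj q, by simp [hq]⟩

lemma intPairs_subset {V : Type*} (G : SimpleGraph V) (S T : Set V) (W : Finset V)
    (hT : T = S ∪ ↑W) (n : V) :
    intPairs G T n ⊆ intPairs G S n ∪ ⋃ z ∈ W, intPairs G S z := by
  rintro ⟨s, t⟩ ⟨hn, hs, ht, hst, hns, hnt, p, hp, hlen, hmem⟩
  have hle : Tᶜ ⊆ Sᶜ := by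
    rw [hT]; exact Set.compl_subset_compl.2 Set.subset_union_left
  let f := SimpleGraph.induceHomOfLE G hle
  have hst' : (⟨s, hle hs⟩ : (Sᶜ : Set V)) ≠ ⟨t, hle ht⟩ := by
    intro h; apply hst; simpa using h
  let p' : (G.induce Sᶜ).Walk ⟨s, hle hs⟩ ⟨t, hle ht⟩ := p.map f.toHom
  have hp'l : p'.length = p.length := SimpleGraph.Walk.length_map _ _
  have hr : (G.induce Sᶜ).Reachable ⟨s, hle hs⟩ ⟨t, hle ht⟩ := ⟨p'⟩
  obtain ⟨q, hq, hql⟩ := hr.exists_path_of_dist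
  by_cases hW : ∃ x ∈ q.support, (x : V) ∈ W
  · right
    obtain ⟨x, hx, hxW⟩ := hW
    have hWT : ∀ y ∈ Tᶜ, y ≠ (x : V) := by
      rintro y hy rfl
      apply hy; rw [hT]; exact Or.inr hxW
    simp only [Set.mem_iUnion]
    refine ⟨x, hxW, x.2, hle hs, hle ht, hst', ?_, ?_, q, hq, hql, hx⟩
    · intro h; exact hWT s hs (congrArg Subtype.val h).symm
    · intro h; exact hWT t ht (congrArg Subtype.val h).symm
  · left
    push Not at hW
    obtain ⟨r, hrl⟩ := lift_walk G S T q (fun x hx => by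
      rw [hT]; rintro (h | h)
      · exact x.2 h
      · exact hW x hx h) hs ht
    have h1 := SimpleGraph.dist_le r
    have h2 := SimpleGraph.dist_le p'
    have h3 : p'.length = (G.induce Sᶜ).dist ⟨s, hle hs⟩ ⟨t, hle ht⟩ := by
      apply le_antisymm _ h2
      rw [hp'l, hlen, ← hql, ← hrl]; exact h1
    refine ⟨hle hn, hle hs, hle ht, hst', ?_, ?_, p', p'.isPath_of_length_eq_dist h3, h3, ?_⟩
    · intro h; apply hns; simpa using h
    · intro h; apply hnt; simpa using h
    · have : f ⟨n, hn⟩ ∈ (p.map f.toHom).support := by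
        rw [SimpleGraph.Walk.support_map]
        exact List.mem_map_of_mem hmem
      exact this

lemma loadDel_le {V : Type*} [Fintype V] (G : SimpleGraph V) (S T : Set V) (W : Finset V)
    (hT : T = S ∪ ↑W) (n : V) :
    loadDel G T n ≤ loadDel G S n + ∑ z ∈ W, loadDel G S z := by
  simp only [loadDel_eq]
  refine (Set.ncard_le_ncard (intPairs_subset G S T W hT n) (Set.toFinite _)).trans ?_
  refine (Set.ncard_union_le _ _).trans ?_
  gcongr
  exact Finset.set_ncard_biUnion_le _ _

/-- **Proposition 2** (sufficient condition for counterfactual validity under the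
shortest-path cascading model): let `Ω_v, Ω_w` be disjoint failed sets, `Ω̂` their
union, and `k` vertex capacities. If for every vertex `n ∉ Ω̂` one has
`k n ≥ ℓ_{G−Ω_v}(n) + Σ_{z ∈ Ω_w} ℓ_{G−Ω_v}(z)` (or the symmetric condition with `v`
and `w` exchanged), then the one-round shortest-path cascade of `Ω̂`,
`c(Ω̂) = {n ∉ Ω̂ : ℓ_{G−Ω̂}(n) > k n}`, is empty. -/
theorem shortestPath_counterfactual_steady {V : Type*} [Fintype V] [DecidableEq V]
    (G : SimpleGraph V) (k : V → ℝ) (Ωv Ωw : Finset V) (hdisj : Disjoint Ωv Ωw)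
    (hcond :
      (∀ n ∉ Ωv ∪ Ωw,
        (loadDel G (↑Ωv) n : ℝ) + ∑ z ∈ Ωw, (loadDel G (↑Ωv) z : ℝ) ≤ k n) ∨
      (∀ n ∉ Ωv ∪ Ωw,
        (loadDel G (↑Ωw) n : ℝ) + ∑ z ∈ Ωv, (loadDel G (↑Ωw) z : ℝ) ≤ k n)) :
    {n : V | n ∉ Ωv ∪ Ωw ∧ k n < (loadDel G (↑(Ωv ∪ Ωw)) n : ℝ)} = ∅ := by
  ext n
  simp only [Set.mem_setOf_eq, Set.mem_empty_iff_false, iff_false, not_and, not_lt]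
  intro hn
  rcases hcond with h | h
  · refine le_trans ?_ (h n hn)
    exact_mod_cast loadDel_le G (↑Ωv) (↑(Ωv ∪ Ωw)) Ωw (by simp) n
  · refine le_trans ?_ (h n hn)
    exact_mod_cast loadDel_le G (↑Ωw) (↑(Ωv ∪ Ωw)) Ωv (by simp [Set.union_comm]) n
end
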